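/- For every directed acyclic graph G as above and every m ≥ 1, the clause set Stone(G,m) is unsatisfiable: no assignment of truth values to the variables p_{i,j} and r_j satisfies every clause of Stone(G,m). -/

import Mathlib

open scoped Classical

/-! ### Clauses and literals -/

abbrev Lit (V : Type) := V × Bool
abbrev Clause (V : Type) := Finset (V × Bool)

/-- Propositional variables for the Stone principle: `p i j` and `r j`. -/
inductive SV where
  | p (i j : ℕ) : SV
  | r (j : ℕ) : SV
deriving DecidableEq

/-- A dag on vertices `1,…,N` with unique sink `1`, in which every non-source vertex
(the vertices `1,…,n`) has exactly the two predecessors `p1 i` and `p2 i`,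
every edge `(i′,i)` satisfies `i′ > i`, and the sources are exactly `n+1,…,N`. -/
structure StoneDag where
  N : ℕ
  n : ℕ
  p1 : ℕ → ℕ
  p2 : ℕ → ℕ
  n_lt_N : n < N
  p1_gt : ∀ i, 1 ≤ i → i ≤ n → i < p1 i
  p2_gt : ∀ i, 1 ≤ i → i ≤ n → i < p2 i
  p1_le : ∀ i, 1 ≤ i → i ≤ n → p1 i ≤ N
  p2_le : ∀ i, 1 ≤ i → i ≤ n → p2 i ≤ N
  p_ne : ∀ i, 1 ≤ i → i ≤ n → p1 i ≠ p2 i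
  unique_sink : ∀ i, 2 ≤ i → i ≤ N → ∃ v, 1 ≤ v ∧ v ≤ n ∧ (p1 v = i ∨ p2 v = i)

/-- The clause set `Stone(G,m)`. -/
def stoneClauses (G : StoneDag) (m : ℕ) : Set (Clause SV) :=
  { C | ∃ i, 1 ≤ i ∧ i ≤ G.N ∧
      C = (Finset.Icc 1 m).image (fun j => ((SV.p i j, true) : Lit SV)) } ∪
  { C | ∃ i j, G.n < i ∧ i ≤ G.N ∧ 1 ≤ j ∧ j ≤ m ∧
      C = {(SV.p i j, false), (SV.r j, true)} } ∪
  { C | ∃ j, 1 ≤ j ∧ j ≤ m ∧ C = {(SV.p 1 j, false), (SV.r j, false)} } ∪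
  { C | ∃ i j j' j'', 1 ≤ i ∧ i ≤ G.n ∧ 1 ≤ j ∧ j ≤ m ∧ 1 ≤ j' ∧ j' ≤ m ∧
      1 ≤ j'' ∧ j'' ≤ m ∧ j ≠ j' ∧ j ≠ j'' ∧
      C = {(SV.p (G.p1 i) j', false), (SV.r j', false),
           (SV.p (G.p2 i) j'', false), (SV.r j'', false),
           (SV.p i j, false), (SV.r j, true)} }

/-! ### Resolution inference rules -/

/-- `(A ∖ {x}) ∪ (B ∖ {¬x})`. -/
def wres {V : Type} [DecidableEq V] (x : V) (A B : Clause V) : Clause V :=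
  A.erase (x, true) ∪ B.erase (x, false)

/-- w-resolution inference. -/
def wstep {V : Type} [DecidableEq V] (x : V) (A B C : Clause V) : Prop :=
  C = wres x A B

/-- ordinary resolution inference. -/
def rstep {V : Type} [DecidableEq V] (x : V) (A B C : Clause V) : Prop :=
  (x, true) ∈ A ∧ (x, false) ∈ B ∧ C = wres x A B

/-- degenerate resolution inference. -/
def dstep {V : Type} [DecidableEq V] (x : V) (A B C : Clause V) : Prop :=
  ((x, true) ∈ A ∧ (x, false) ∈ B ∧ C = wres x A B) ∨
  ((x, true) ∈ A ∧ (x, false) ∉ B ∧ C = B) ∨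
  ((x, true) ∉ A ∧ (x, false) ∈ B ∧ C = A) ∨
  ((x, true) ∉ A ∧ (x, false) ∉ B ∧ (C = A ∨ C = B))

/-! ### Tree-like proofs -/

/-- Binary proof trees: each node is labeled with a clause, internal nodes also
with a resolution variable. -/
inductive PTree (V : Type) [DecidableEq V] where
  | leaf : Clause V → PTree V
  | node : Clause V → V → PTree V → PTree V → PTree V

namespace PTree

variable {V : Type} [DecidableEq V]

/-- The clause labeling the root. -/
def clause : PTree V → Clause V
  | leaf c => c
  | node c _ _ _ => c

/-- Number of nodes. -/
def size : PTree V → ℕ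
  | leaf _ => 1
  | node _ _ t1 t2 => t1.size + t2.size + 1

/-- The set of variables used as resolution variables. -/
def resVars : PTree V → Finset V
  | leaf _ => ∅
  | node _ x t1 t2 => insert x (t1.resVars ∪ t2.resVars)

/-- No variable is used as a resolution variable more than once on any
root-to-leaf path. -/
def regular : PTree V → Prop
  | leaf _ => True
  | node _ x t1 t2 => x ∉ t1.resVars ∧ x ∉ t2.resVars ∧ t1.regular ∧ t2.regular

/-- Every internal node is obtained from its children by the inference `step`. -/
def wf (step : V → Clause V → Clause V → Clause V → Prop) : PTree V → Prop
  | leaf _ => True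
  | node c x t1 t2 => step x t1.clause t2.clause c ∧ t1.wf step ∧ t2.wf step

/-- All clauses occurring in the tree. -/
def clauses : PTree V → Set (Clause V)
  | leaf c => {c}
  | node c _ t1 t2 => t1.clauses ∪ t2.clauses ∪ {c}

/-- Every leaf is labeled by a clause of `Γ` or by a clause occurring strictly
earlier in postorder; `S` is the set of clauses occurring before this subtree. -/
def lemmasOK (Γ : Set (Clause V)) : PTree V → Set (Clause V) → Prop
  | leaf c, S => c ∈ Γ ∨ c ∈ S
  | node _ _ t1 t2, S => t1.lemmasOK Γ S ∧ t2.lemmasOK Γ (S ∪ t1.clauses)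

/-- Every leaf is labeled by a clause of `Γ`. -/
def leavesIn (Γ : Set (Clause V)) : PTree V → Prop
  | leaf c => c ∈ Γ
  | node _ _ t1 t2 => t1.leavesIn Γ ∧ t2.leavesIn Γ

/-- Postorder scan computing, from the set `L` of clauses learned so far
(initially `Γ`), the pair of (i) the set of clauses learned after traversing the
subtree — a clause becomes learned when it is the final clause of an input
subderivation, i.e. a subderivation each of whose inferences has at least one
hypothesis that is already learned — and (ii) whether this subtree is an input
subderivation. -/
def scan : PTree V → Set (Clause V) → Set (Clause V) × Prop
  | leaf _, L => (L, True)
  | node c _ t1 t2, L =>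
      let r1 := t1.scan L
      let r2 := t2.scan r1.1
      let inp : Prop := r1.2 ∧ r2.2 ∧ (t1.clause ∈ r1.1 ∨ t2.clause ∈ r2.1)
      ({ d | d ∈ r2.1 ∨ (inp ∧ d = c) }, inp)

/-- Every leaf is labeled by a learned clause (a clause of the initial set `L`,
or one derived by an input subderivation strictly earlier in postorder). -/
def lemOK : PTree V → Set (Clause V) → Prop
  | leaf c, L => c ∈ L
  | node _ _ t1 t2, L => t1.lemOK L ∧ t2.lemOK (t1.scan L).1

end PTree

/-- regWRTL refutation of `Γ`. -/
def RegWRTLRefutation {V : Type} [DecidableEq V] (Γ : Set (Clause V)) (T : PTree V) : Prop :=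
  T.clause = ∅ ∧ T.wf wstep ∧ T.regular ∧ T.lemmasOK Γ ∅

/-- pool resolution refutation of `Γ`. -/
def PoolRefutation {V : Type} [DecidableEq V] (Γ : Set (Clause V)) (T : PTree V) : Prop :=
  T.clause = ∅ ∧ T.wf dstep ∧ T.regular ∧ T.lemmasOK Γ ∅

/-- regRTL refutation of `Γ`. -/
def RegRTLRefutation {V : Type} [DecidableEq V] (Γ : Set (Clause V)) (T : PTree V) : Prop :=
  T.clause = ∅ ∧ T.wf rstep ∧ T.regular ∧ T.lemmasOK Γ ∅

/-- regRTI refutation of `Γ`: all lemmas are input lemmas. -/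
def RegRTIRefutation {V : Type} [DecidableEq V] (Γ : Set (Clause V)) (T : PTree V) : Prop :=
  T.clause = ∅ ∧ T.wf rstep ∧ T.regular ∧ T.lemOK Γ

/-- regRTI derivation of the clause `D` from `Γ`. -/
def RegRTIDeriv {V : Type} [DecidableEq V] (Γ : Set (Clause V)) (D : Clause V)
    (T : PTree V) : Prop :=
  T.clause = D ∧ T.wf rstep ∧ T.regular ∧ T.lemOK Γ ∧
  ∀ x ∈ T.resVars, (x, true) ∉ D ∧ (x, false) ∉ D

/-- regular tree-like resolution derivation of the clause `D` from `Γ`. -/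
def RegTreeDeriv {V : Type} [DecidableEq V] (Γ : Set (Clause V)) (D : Clause V)
    (T : PTree V) : Prop :=
  T.clause = D ∧ T.wf rstep ∧ T.regular ∧ T.leavesIn Γ ∧
  ∀ x ∈ T.resVars, (x, true) ∉ D ∧ (x, false) ∉ D

/-! ### Dag-like derivations -/

/-- A dag-like resolution derivation: a sequence of `len` clauses, each an
axiom (`just i = none`) or obtained by resolution from two earlier clauses. -/
structure DagDeriv (V : Type) [DecidableEq V] where
  len : ℕ
  cl : ℕ → Clause V
  just : ℕ → Option (ℕ × ℕ × V)

namespace DagDeriv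

variable {V : Type} [DecidableEq V]

/-- Validity relative to the initial clause set `Γ`. -/
def ok (D : DagDeriv V) (Γ : Set (Clause V)) : Prop :=
  ∀ i, i < D.len →
    match D.just i with
    | none => D.cl i ∈ Γ
    | some (a, b, x) => a < i ∧ b < i ∧ rstep x (D.cl a) (D.cl b) (D.cl i)

/-- `j` is a premise of `i`. -/
def prem (D : DagDeriv V) (i j : ℕ) : Prop :=
  ∃ a b x, D.just i = some (a, b, x) ∧ (j = a ∨ j = b)

/-- `j` lies in the subderivation of `i` (is reachable from `i` in the dag). -/
def reach (D : DagDeriv V) : ℕ → ℕ → Prop := Relation.ReflTransGen D.prem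

/-- `x` is the resolution variable of the inference at `i`. -/
def resAt (D : DagDeriv V) (i : ℕ) (x : V) : Prop := ∃ a b, D.just i = some (a, b, x)

/-- No variable is used as resolution variable twice along a path of the dag. -/
def regular (D : DagDeriv V) : Prop :=
  ∀ i a b x, D.just i = some (a, b, x) →
    ∀ j, (D.reach a j ∨ D.reach b j) → ¬ D.resAt j x

/-- The subderivation of `i` uses `x` as a resolution variable. -/
def usesVar (D : DagDeriv V) (i : ℕ) (x : V) : Prop := ∃ j, D.reach i j ∧ D.resAt j x

end DagDeriv

/-! ### Supports, bypassing, and the sets `B`, `B⁺`, `S_ℓ^B(C)` for a clause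
`C = ¬p_{i_1,j_1} ∨ … ∨ ¬p_{i_k,j_k}` given by `k` and the functions
`I J : ℕ → ℕ` (with `I ℓ = i_ℓ`, `J ℓ = j_ℓ` for `1 ≤ ℓ ≤ k`). -/

/-- Index `ℓ` is bypassed. -/
def bypassed (k : ℕ) (J : ℕ → ℕ) (ℓ : ℕ) : Prop :=
  ∃ ℓ', ℓ < ℓ' ∧ ℓ' ≤ k ∧ J ℓ' = J ℓ

/-- `ℓ'` is the max-bypasser of `ℓ`. -/
def maxByp (k : ℕ) (J : ℕ → ℕ) (ℓ ℓ' : ℕ) : Prop :=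
  ℓ < ℓ' ∧ ℓ' ≤ k ∧ J ℓ' = J ℓ ∧ ∀ a, ℓ < a → a ≤ k → J a = J ℓ → a ≤ ℓ'

/-- `i_{ℓ'}` directly supports `i_ℓ`. -/
def dsup (G : StoneDag) (k : ℕ) (I J : ℕ → ℕ) (ℓ' ℓ : ℕ) : Prop :=
  1 ≤ ℓ ∧ ℓ < ℓ' ∧ ℓ' ≤ k ∧
  (maxByp k J ℓ ℓ' ∨
    (¬ bypassed k J ℓ ∧ (I ℓ' = G.p1 (I ℓ) ∨ I ℓ' = G.p2 (I ℓ))))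

/-- `i_a` supports `i_b`: reflexive transitive closure of direct support. -/
def supp (G : StoneDag) (k : ℕ) (I J : ℕ → ℕ) : ℕ → ℕ → Prop :=
  Relation.ReflTransGen (dsup G k I J)

/-- `dom(C)` as a set of vertices. -/
def domv (k : ℕ) (I : ℕ → ℕ) : Set ℕ := { v | ∃ a, 1 ≤ a ∧ a ≤ k ∧ I a = v }

/-- `S_ℓ(C)`: the set of vertices of `dom(C)` supporting `i_ℓ`. -/
def suppSet (G : StoneDag) (k : ℕ) (I J : ℕ → ℕ) (ℓ : ℕ) : Set ℕ :=
  { v | ∃ a, 1 ≤ a ∧ a ≤ k ∧ I a = v ∧ supp G k I J a ℓ }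

/-- `i_ℓ ∈ B`: not bypassed and some predecessor outside `dom(C)`. -/
def Bidx (G : StoneDag) (k : ℕ) (I J : ℕ → ℕ) (ℓ : ℕ) : Prop :=
  1 ≤ ℓ ∧ ℓ ≤ k ∧ ¬ bypassed k J ℓ ∧
  (G.p1 (I ℓ) ∉ domv k I ∨ G.p2 (I ℓ) ∉ domv k I)

/-- `i_ℓ ∈ B₁`: exactly one predecessor outside `dom(C)`. -/
def B1idx (G : StoneDag) (k : ℕ) (I J : ℕ → ℕ) (ℓ : ℕ) : Prop :=
  Bidx G k I J ℓ ∧ (G.p1 (I ℓ) ∈ domv k I ∨ G.p2 (I ℓ) ∈ domv k I)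

/-- `i_ℓ ∈ B₂`: both predecessors outside `dom(C)`. -/
def B2idx (G : StoneDag) (k : ℕ) (I J : ℕ → ℕ) (ℓ : ℕ) : Prop :=
  1 ≤ ℓ ∧ ℓ ≤ k ∧ ¬ bypassed k J ℓ ∧
  G.p1 (I ℓ) ∉ domv k I ∧ G.p2 (I ℓ) ∉ domv k I

/-- `i_ℓ ∈ B⁺`: in `B`, or bypassed with max-bypasser in `B`. -/
def Bplus (G : StoneDag) (k : ℕ) (I J : ℕ → ℕ) (ℓ : ℕ) : Prop :=
  Bidx G k I J ℓ ∨ (1 ≤ ℓ ∧ ℓ ≤ k ∧ ∃ ℓ', maxByp k J ℓ ℓ' ∧ Bidx G k I J ℓ')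

/-- Membership in `S_ℓ^B(C)` (on indices). -/
inductive SBmem (G : StoneDag) (k : ℕ) (I J : ℕ → ℕ) (ℓ : ℕ) : ℕ → Prop where
  | base : SBmem G k I J ℓ ℓ
  | byp (a b : ℕ) : SBmem G k I J ℓ a → (a = ℓ ∨ ¬ Bidx G k I J a) →
      maxByp k J a b → ¬ Bidx G k I J b → SBmem G k I J ℓ b
  | pred (a b : ℕ) : SBmem G k I J ℓ a → (a = ℓ ∨ ¬ Bidx G k I J a) →
      ¬ bypassed k J a → 1 ≤ b → b ≤ k →
      (I b = G.p1 (I a) ∨ I b = G.p2 (I a)) → SBmem G k I J ℓ b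

/-- The clause `C_ℓ`. -/
noncomputable def Clc (G : StoneDag) (k : ℕ) (I J : ℕ → ℕ) (ℓ : ℕ) : Clause SV :=
  ((Finset.Icc 1 k).filter fun a =>
      SBmem G k I J ℓ a ∧ ¬(a = ℓ ∧ bypassed k J ℓ)).image
    fun a => ((SV.p (I a) (J a), false) : Lit SV)

/-- The clause `E_ℓ`. -/
noncomputable def Elc (G : StoneDag) (k : ℕ) (I J : ℕ → ℕ) (ℓ : ℕ) : Clause SV :=
  ((Finset.Icc 1 k).filter fun a =>
      SBmem G k I J ℓ a ∧ Bplus G k I J a ∧ (Bidx G k I J ℓ → a ≠ ℓ)).image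
    fun a => ((SV.r (J a), false) : Lit SV)

/-- `t_1,…,t_r` enumerates the indices of `B ∪ {1}` in decreasing order. -/
def EnumB (G : StoneDag) (k : ℕ) (I J : ℕ → ℕ) (r : ℕ) (t : ℕ → ℕ) : Prop :=
  (∀ q, 1 ≤ q → q ≤ r → (Bidx G k I J (t q) ∨ t q = 1)) ∧
  (∀ q q', 1 ≤ q → q < q' → q' ≤ r → t q' < t q) ∧
  (∀ ℓ, Bidx G k I J ℓ ∨ ℓ = 1 → ∃ q, 1 ≤ q ∧ q ≤ r ∧ t q = ℓ)

/-- The clause `F_q`. -/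
noncomputable def Fcl (G : StoneDag) (k : ℕ) (I J : ℕ → ℕ) (r : ℕ) (t : ℕ → ℕ)
    (q : ℕ) : Clause SV :=
  if q = r ∧ ¬ Bidx G k I J 1 then Elc G k I J 1
  else (Finset.Icc 1 (q - 1)).image fun q' => ((SV.r (J (t q')), false) : Lit SV)

/-- The standing hypotheses on the clause `C`: `k ≥ 1`, `1 = i_1 < … < i_k ≤ n`,
`j_ℓ ∈ {1,…,m}`, and every vertex of `dom(C)` supports vertex `1`. -/
def GoodC (G : StoneDag) (m k : ℕ) (I J : ℕ → ℕ) : Prop :=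
  1 ≤ k ∧ I 1 = 1 ∧ I k ≤ G.n ∧
  (∀ a b, 1 ≤ a → a < b → b ≤ k → I a < I b) ∧
  (∀ a, 1 ≤ a → a ≤ k → 1 ≤ J a ∧ J a ≤ m) ∧
  (∀ a, 1 ≤ a → a ≤ k → supp G k I J a 1)

/-- Under a satisfying assignment every vertex carries a stone. -/
theorem exists_stone_of_satisfies {G : StoneDag} {m : ℕ} {v : SV → Bool}
    (hv : ∀ C ∈ stoneClauses G m, ∃ l ∈ C, v l.1 = l.2) {i : ℕ} (hi : 1 ≤ i) (hiN : i ≤ G.N) :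
    ∃ j, 1 ≤ j ∧ j ≤ m ∧ v (SV.p i j) = true := by
  obtain ⟨l, hl, hvl⟩ := hv _ (Or.inl (Or.inl (Or.inl ⟨i, hi, hiN, rfl⟩)))
  obtain ⟨j, hj, rfl⟩ := Finset.mem_image.mp hl
  exact ⟨j, (Finset.mem_Icc.mp hj).1, (Finset.mem_Icc.mp hj).2, hvl⟩

/-- Every stone placed on a vertex is red, by induction from the sources down to the sink. -/
theorem red_of_satisfies {G : StoneDag} {m : ℕ} {v : SV → Bool}
    (hv : ∀ C ∈ stoneClauses G m, ∃ l ∈ C, v l.1 = l.2) {i j : ℕ} (hi : 1 ≤ i) (hiN : i ≤ G.N)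
    (hj : 1 ≤ j) (hjm : j ≤ m) (hp : v (SV.p i j) = true) : v (SV.r j) = true := by
  by_cases hin : G.n < i
  · have h := hv {(SV.p i j, false), (SV.r j, true)}
      (Or.inl (Or.inl (Or.inr ⟨i, j, hin, hiN, hj, hjm, rfl⟩)))
    simpa [hp] using h
  · have hle : i ≤ G.n := not_lt.mp hin
    have h1gt := G.p1_gt i hi hle
    have h2gt := G.p2_gt i hi hle
    have h1le := G.p1_le i hi hle
    have h2le := G.p2_le i hi hle
    obtain ⟨a, ha, ham, hpa⟩ := exists_stone_of_satisfies hv (by lia) h1le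
    obtain ⟨b, hb, hbm, hpb⟩ := exists_stone_of_satisfies hv (by lia) h2le
    have hra := red_of_satisfies hv (by lia) h1le ha ham hpa
    have hrb := red_of_satisfies hv (by lia) h2le hb hbm hpb
    by_cases hja : j = a
    · exact hja ▸ hra
    by_cases hjb : j = b
    · exact hjb ▸ hrb
    have h := hv {(SV.p (G.p1 i) a, false), (SV.r a, false), (SV.p (G.p2 i) b, false),
        (SV.r b, false), (SV.p i j, false), (SV.r j, true)}
      (Or.inr ⟨i, j, a, b, hi, hle, hj, hjm, ha, ham, hb, hbm, hja, hjb, rfl⟩)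
    simpa [hp, hpa, hpb, hra, hrb] using h
termination_by G.N - i

/-- `Stone(G,m)` is unsatisfiable for every `m ≥ 1`. -/
theorem stone_unsatisfiable (G : StoneDag) (m : ℕ) (hm : 1 ≤ m) :
    ¬ ∃ v : SV → Bool, ∀ C ∈ stoneClauses G m, ∃ l ∈ C, v l.1 = l.2 := by
  rintro ⟨v, hv⟩
  have hN : 1 ≤ G.N := Nat.one_le_of_lt G.n_lt_N
  obtain ⟨j, hj, hjm, hp⟩ := exists_stone_of_satisfies hv le_rfl hN
  have hr := red_of_satisfies hv le_rfl hN hj hjm hp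
  have h := hv {(SV.p 1 j, false), (SV.r j, false)} (Or.inl (Or.inr ⟨j, hj, hjm, rfl⟩))
  simp [hp, hr] at h
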